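/- (Main existence theorem on a bounded half-open interval.) Let b ∈ (0,∞), J_b = [0,b) and t₀ ∈ (0,b). Assume ⟨α_n,1⟩ ≠ 1 for every n ∈ ℕ. Let (n_p)_{p∈ℕ} be a strictly increasing sequence of natural numbers and (t_p)_{p∈ℕ} a sequence with t₀ < t₁ < t₂ < … and t_p → b. Suppose that for every p ∈ ℕ there exist a nonnegative A_p ∈ L¹(0,t₀) and constants B_p, C_p ≥ 0 such that for all x ∈ 𝒮: [f(t,x)]_{n_p} ≤ A_p(t)[x]_{n_p} + B_p for t ∈ [0,t₀], and [f(t,x)]_{n_p} ≤ C_p([x]_{n_p} + 1) for t ∈ [t₀,t_p]. If {[(𝕀 − ⟨α,𝕀⟩)^{-1}]_{n_p}·[‖α‖_*]_{n_p} + 1}·‖A_p‖_{L¹} < 1 for every p ∈ ℕ, then there exists x = (x_n) ∈ C(J_b,𝒮) such that each x_n is differentiable on J_b, x_n'(t) = f_n(t,x(t)) for all t ∈ J_b, and x_n(0) = ⟨α_n, x_n|_{[0,t₀]}⟩ for every n ∈ ℕ. -/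

import Mathlib

open Set MeasureTheory

noncomputable section

/-- Projection of `ℝ` onto the half line `J = [0, ∞)`. -/
def pj (s : ℝ) : Set.Ici (0:ℝ) := ⟨max 0 s, le_max_left 0 s⟩

/-- The seminorm `[x]ₙ = max_{1 ≤ i ≤ n} |xᵢ|` on `𝒮 = ℝ^ℕ` (components indexed from `0` to `n-1`). -/
def semS (n : ℕ) (x : ℕ → ℝ) : ℝ := ⨆ i : Fin n, |x (i : ℕ)|

/-!
Since `⟨αₙ, 1⟩ ≠ 1`, the nonlocal condition determines the initial value of `xₙ` from its
derivative, so solutions are the fixed points of an integral operator. On a pointwise closed convex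
set of curves that are uniformly bounded on each `[0, T]`, `T < b`, the values of the operator are
uniformly Lipschitz on `[0, T]`, hence relatively compact, and the Schauder–Tychonoff theorem
applies. The smallness condition provides a bound `R` on `[0, t₀]` that the operator preserves.
Beyond `t₀` the operator is of Volterra type, and the bound continues exponentially, as in
Gronwall's lemma.

Brouwer's theorem is reached through determinants. Let `h` be a `C¹` map that vanishes on the
boundary of a ball `B` in `ℝⁿ`, with `id + h` mapping `B` into itself. Then
`ε ↦ ∫ x in B, det (1 + ε h'(x))` is a polynomial, and it equals the volume of `B` for small
`ε ≥ 0`, where `id + ε h` is a bijection of `B`; so it is constant. For a `C¹` retraction `id + h`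
of `B` onto its boundary, however, the integrand would vanish at `ε = 1`.
-/

/-! ### Brouwer's fixed point theorem -/

section Determinants

theorem exists_extrapolation_weights {𝕜 : Type*} [Field 𝕜] {s : Set 𝕜} (hs : s.Infinite)
    (n : ℕ) (x : 𝕜) :
    ∃ v w : Fin (n + 1) → 𝕜, (∀ i, v i ∈ s) ∧
      ∀ p : Polynomial 𝕜, p.natDegree ≤ n → p.eval x = ∑ i, w i * p.eval (v i) := by
  classical
  let v : Fin (n + 1) → 𝕜 := fun i => hs.natEmbedding s i
  have hv : Function.Injective v := fun i j h =>
    Fin.ext ((hs.natEmbedding s).injective (Subtype.ext h))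
  refine ⟨v, fun i => (Lagrange.basis Finset.univ v i).eval x, fun i => Subtype.coe_prop _,
    fun p hp => ?_⟩
  have hdeg : p.degree < (Finset.univ : Finset (Fin (n + 1))).card := by
    rw [Finset.card_univ, Fintype.card_fin]
    exact p.degree_le_natDegree.trans_lt (by exact_mod_cast Nat.lt_succ_of_le hp)
  conv_lhs => rw [Lagrange.eq_interpolate hv.injOn hdeg]
  simp only [Lagrange.interpolate_apply, Polynomial.eval_finsetSum, Polynomial.eval_mul,
    Polynomial.eval_C, mul_comm]

theorem exists_polynomial_eval_eq_det_one_add_smul {𝕜 V : Type*} [Field 𝕜] [AddCommGroup V]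
    [Module 𝕜 V] [FiniteDimensional 𝕜 V] (A : V →ₗ[𝕜] V) :
    ∃ p : Polynomial 𝕜, p.natDegree ≤ Module.finrank 𝕜 V ∧
      ∀ t, p.eval t = LinearMap.det (1 + t • A) := by
  classical
  let b := Module.finBasis 𝕜 V
  let M := LinearMap.toMatrix b b A
  refine ⟨((Polynomial.X : Polynomial 𝕜) • M.map Polynomial.C + Matrix.map 1 Polynomial.C).det, ?_,
    fun t => ?_⟩
  · simpa only [Fintype.card_fin] using Polynomial.natDegree_det_X_add_C_le M 1
  · rw [← Polynomial.coe_evalRingHom, RingHom.map_det, ← LinearMap.det_toMatrix b]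
    congr 1
    simp only [map_add, map_smul, LinearMap.toMatrix_one]
    ext i j
    simp [M, add_comm, mul_comm t]

theorem det_one_add_pos_of_norm_lt_one {V : Type*} [NormedAddCommGroup V] [NormedSpace ℝ V]
    [FiniteDimensional ℝ V] {A : V →L[ℝ] V} (hA : ‖A‖ < 1) : 0 < (1 + A).det := by
  have : CompleteSpace V := FiniteDimensional.complete ℝ V
  have det_ne_zero : ∀ s ∈ Icc (0 : ℝ) 1, (1 + s • A).det ≠ 0 := fun s hs => by
    have hsA : ‖-(s • A)‖ < 1 := by
      rw [norm_neg, norm_smul, Real.norm_of_nonneg hs.1]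
      exact (mul_le_of_le_one_left (norm_nonneg A) hs.2).trans_lt hA
    have hunit := isUnit_one_sub_of_norm_lt_one hsA
    rw [sub_neg_eq_add] at hunit
    exact (LinearMap.isUnit_det _ (hunit.map ContinuousLinearMap.toLinearMapRingHom)).ne_zero
  have hcont : ContinuousOn (fun s : ℝ => (1 + s • A).det) (Icc 0 1) :=
    (ContinuousLinearMap.continuous_det.comp (by fun_prop)).continuousOn
  by_contra! hneg
  obtain ⟨s, hs, hs0⟩ := intermediate_value_Icc' zero_le_one hcont
    (show (0 : ℝ) ∈ _ by simpa [ContinuousLinearMap.det] using hneg)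
  exact det_ne_zero s hs hs0

theorem det_fderiv_eq_zero_of_norm_eventuallyEq {V : Type*} [NormedAddCommGroup V]
    [InnerProductSpace ℝ V] [FiniteDimensional ℝ V] {r : V → V} {r' : V →L[ℝ] V} {x : V} {c : ℝ}
    (hr : HasFDerivAt r r' x) (hc : c ≠ 0) (hnorm : ∀ᶠ y in nhds x, ‖r y‖ = c) : r'.det = 0 := by
  have hconst : (fun y => ‖r y‖ ^ 2) =ᶠ[nhds x] fun _ => c ^ 2 := by
    filter_upwards [hnorm] with y hy
    rw [hy]
  have hderiv := hr.norm_sq.unique ((hasFDerivAt_const (c ^ 2) x).congr_of_eventuallyEq hconst)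
  by_contra hdet
  obtain ⟨u, hu⟩ : ∃ u, r' u = r x :=
    ((r' : V →ₗ[ℝ] V).equivOfDetNeZero hdet).surjective (r x)
  have hrx : ‖r x‖ = 0 := by
    simpa [hu] using DFunLike.congr_fun hderiv u
  exact hc (hnorm.self_of_nhds.symm.trans hrx)

end Determinants

theorem inter_frontier_nonempty_of_isPreconnected {X : Type*} [TopologicalSpace X] {s t : Set X}
    (ht : IsPreconnected t) (hts : (t ∩ s).Nonempty) (hts' : (t ∩ sᶜ).Nonempty) :
    (t ∩ frontier s).Nonempty := by
  by_contra! hempty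
  have hcover : t ⊆ interior s ∪ (closure s)ᶜ := fun x hx => by
    by_contra! hx'
    simp only [mem_union, mem_compl_iff, not_or, not_not] at hx'
    exact (hempty ▸ notMem_empty x) ⟨hx, hx'.2, hx'.1⟩
  rcases ht.subset_or_subset isOpen_interior isClosed_closure.isOpen_compl
    (disjoint_compl_right.mono_left (interior_subset.trans subset_closure)) hcover with h | h
  · obtain ⟨x, hx, hxs⟩ := hts'
    exact hxs (interior_subset (h hx))
  · obtain ⟨x, hx, hxs⟩ := hts
    exact h hx (subset_closure hxs)

theorem lipschitzWith_indicator_of_frontier_eq_zero {E F : Type*} [SeminormedAddCommGroup E]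
    [NormedSpace ℝ E] [SeminormedAddCommGroup F] {s : Set E} {h : E → F} {C : NNReal}
    (hs : IsClosed s) (hh : LipschitzOnWith C h s) (h0 : ∀ x ∈ frontier s, h x = 0) :
    LipschitzWith C (s.indicator h) := by
  have norm_le : ∀ x ∈ s, ∀ y ∉ s, ‖h x‖ ≤ C * ‖x - y‖ := fun x hx y hy => by
    obtain ⟨z, hz, hzs⟩ := inter_frontier_nonempty_of_isPreconnected
      (convex_segment x y).isPreconnected ⟨x, left_mem_segment ℝ x y, hx⟩
      ⟨y, right_mem_segment ℝ x y, hy⟩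
    have hxz := hh.norm_sub_le hx (hs.frontier_subset hzs)
    rw [h0 z hzs, sub_zero] at hxz
    have hzy : ‖x - z‖ ≤ ‖x - y‖ := by
      rw [← dist_eq_norm, ← dist_eq_norm, ← dist_add_dist_of_mem_segment hz]
      exact le_add_of_nonneg_right dist_nonneg
    exact hxz.trans (mul_le_mul_of_nonneg_left hzy C.coe_nonneg)
  refine LipschitzWith.of_dist_le_mul fun x y => ?_
  rw [dist_eq_norm, dist_eq_norm]
  by_cases hx : x ∈ s <;> by_cases hy : y ∈ s
  · simpa only [indicator_of_mem hx, indicator_of_mem hy] using hh.norm_sub_le hx hy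
  · simpa only [indicator_of_mem hx, indicator_of_notMem hy, sub_zero] using norm_le x hx y hy
  · simpa only [indicator_of_notMem hx, indicator_of_mem hy, zero_sub, norm_neg, norm_sub_rev x]
      using norm_le y hy x hx
  · simp only [indicator_of_notMem hx, indicator_of_notMem hy, sub_self, norm_zero]
    positivity

theorem bijective_id_add_of_lipschitzWith {E : Type*} [NormedAddCommGroup E] [NormedSpace ℝ E]
    [CompleteSpace E] {h : E → E} {c : NNReal} (hh : LipschitzWith c h) (hc : c < 1) :
    Function.Bijective fun x => x + h x := by
  have happrox : ApproximatesLinearOn (fun x => x + h x)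
      (ContinuousLinearEquiv.refl ℝ E : E →L[ℝ] E) univ c := fun x _ y _ => by
    simpa [add_sub_add_comm] using hh.norm_sub_le x y
  have hc' : Subsingleton E ∨
      c < ‖((ContinuousLinearEquiv.refl ℝ E).symm : E →L[ℝ] E)‖₊⁻¹ := by
    refine (subsingleton_or_nontrivial E).imp_right fun (_ : Nontrivial E) => ?_
    have hnorm : ‖ContinuousLinearMap.id ℝ E‖₊ = 1 := NNReal.eq ContinuousLinearMap.norm_id
    simpa [hnorm] using hc
  exact ⟨injOn_univ.1 (injOn_iff_injective.2 (happrox.injective hc')), happrox.surjective hc'⟩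

theorem image_eq_of_bijective_of_eqOn_compl {X : Type*} {φ : X → X} {s : Set X}
    (hφ : Function.Bijective φ) (hs : MapsTo φ s s) (hsc : EqOn φ id sᶜ) : φ '' s = s := by
  refine hs.image_subset.antisymm fun y hy => ?_
  obtain ⟨x, rfl⟩ := hφ.surjective y
  by_cases hx : x ∈ s
  · exact mem_image_of_mem φ hx
  · rw [hsc hx] at hy
    exact absurd hy hx

theorem setIntegral_det_one_add_eq_measureReal {E : Type*} [NormedAddCommGroup E]
    [NormedSpace ℝ E] [FiniteDimensional ℝ E] [MeasurableSpace E] [BorelSpace E]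
    (μ : Measure E) [μ.IsAddHaarMeasure] {s : Set E} (hs : IsClosed s) (hconv : Convex ℝ s)
    {h : E → E} {h' : E → E →L[ℝ] E} {c : NNReal} (hc : c < 1)
    (hh : ∀ x ∈ s, HasFDerivWithinAt h (h' x) s x) (hbound : ∀ x ∈ s, ‖h' x‖₊ ≤ c)
    (h0 : ∀ x ∈ frontier s, h x = 0) (hmaps : ∀ x ∈ s, x + h x ∈ s) :
    ∫ x in s, (1 + h' x).det ∂μ = μ.real s := by
  have : CompleteSpace E := FiniteDimensional.complete ℝ E
  let φ : E → E := fun x => x + s.indicator h x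
  have hφs : EqOn φ (fun x => x + h x) s := fun x hx => by simp only [φ, indicator_of_mem hx]
  have hφbij : Function.Bijective φ :=
    bijective_id_add_of_lipschitzWith (lipschitzWith_indicator_of_frontier_eq_zero hs
      (hconv.lipschitzOnWith_of_nnnorm_hasFDerivWithin_le hh hbound) h0) hc
  have hφimage : φ '' s = s := image_eq_of_bijective_of_eqOn_compl hφbij
    (fun x hx => by rw [hφs hx]; exact hmaps x hx)
    (fun x hx => by simp only [φ, indicator_of_notMem hx, add_zero, id_eq])
  have hφderiv : ∀ x ∈ s, HasFDerivWithinAt φ (1 + h' x) s x := fun x hx =>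
    ((hasFDerivWithinAt_id x s).add (hh x hx)).congr' hφs hx
  have habs : ∀ x ∈ s, (1 + h' x).det = |(1 + h' x).det| • (1 : ℝ) := fun x hx => by
    rw [abs_of_pos (det_one_add_pos_of_norm_lt_one ((hbound x hx).trans_lt hc)), smul_eq_mul,
      mul_one]
  calc ∫ x in s, (1 + h' x).det ∂μ
    _ = ∫ x in s, |(1 + h' x).det| • (1 : ℝ) ∂μ := setIntegral_congr_fun hs.measurableSet habs
    _ = ∫ _ in φ '' s, (1 : ℝ) ∂μ := (integral_image_eq_integral_abs_det_fderiv_smul μ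
      hs.measurableSet hφderiv hφbij.injective.injOn fun _ => 1).symm
    _ = μ.real s := by rw [hφimage, setIntegral_const, smul_eq_mul, mul_one]

theorem setIntegral_det_one_add_smul_of_lt {E : Type*} [NormedAddCommGroup E]
    [NormedSpace ℝ E] [FiniteDimensional ℝ E] [MeasurableSpace E] [BorelSpace E]
    (μ : Measure E) [μ.IsAddHaarMeasure] {s : Set E} (hs : IsClosed s) (hconv : Convex ℝ s)
    {h : E → E} {h' : E → E →L[ℝ] E} {C : NNReal}
    (hh : ∀ x ∈ s, HasFDerivWithinAt h (h' x) s x) (hbound : ∀ x ∈ s, ‖h' x‖₊ ≤ C)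
    (h0 : ∀ x ∈ frontier s, h x = 0) (hmaps : ∀ x ∈ s, x + h x ∈ s) {t : ℝ} (ht0 : 0 ≤ t)
    (ht1 : t ≤ 1) (htC : t * C < 1) :
    ∫ x in s, (1 + t • h' x).det ∂μ = μ.real s := by
  lift t to NNReal using ht0
  refine setIntegral_det_one_add_eq_measureReal μ hs hconv (c := t * C) (by exact_mod_cast htC)
    (fun x hx => (hh x hx).const_smul (t : ℝ)) (fun x hx => ?_)
    (fun x hx => by rw [Pi.smul_apply, h0 x hx, smul_zero]) (fun x hx => ?_)
  · rw [nnnorm_smul, NNReal.nnnorm_eq]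
    gcongr
    exact hbound x hx
  · simpa using hconv.add_smul_sub_mem hx (hmaps x hx) ⟨t.coe_nonneg, ht1⟩

theorem setIntegral_det_one_add_of_contDiff {E : Type*} [NormedAddCommGroup E]
    [NormedSpace ℝ E] [FiniteDimensional ℝ E] [MeasurableSpace E] [BorelSpace E]
    (μ : Measure E) [μ.IsAddHaarMeasure] {s : Set E} (hs : IsCompact s) (hconv : Convex ℝ s)
    {h : E → E} {h' : E → E →L[ℝ] E}
    (hh : ∀ x ∈ s, HasFDerivWithinAt h (h' x) s x) (hh' : ContinuousOn h' s)
    (h0 : ∀ x ∈ frontier s, h x = 0) (hmaps : ∀ x ∈ s, x + h x ∈ s) :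
    ∫ x in s, (1 + h' x).det ∂μ = μ.real s := by
  obtain ⟨C, hC⟩ := hs.exists_bound_of_continuousOn hh'
  obtain ⟨v, w, hv, hvw⟩ := exists_extrapolation_weights
    (Ioo_infinite (show (0 : ℝ) < (1 + C.toNNReal)⁻¹ by positivity)) (Module.finrank ℝ E) 1
  have hsmall : ∀ i, ∫ x in s, (1 + v i • h' x).det ∂μ = μ.real s := fun i => by
    have hlt : v i * (1 + C.toNNReal) < 1 := by
      rw [← lt_div_iff₀ (by positivity), one_div]
      exact (hv i).2
    have hpos := mul_nonneg (hv i).1.le C.toNNReal.coe_nonneg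
    have hvi := (hv i).1
    exact setIntegral_det_one_add_smul_of_lt μ hs.isClosed hconv hh
      (fun x hx => NNReal.coe_le_coe.1 ((hC x hx).trans (Real.le_coe_toNNReal C))) h0 hmaps
      hvi.le (by linarith) (by linarith)
  have hextrapolate : ∀ x, (1 + h' x).det = ∑ i, w i * (1 + v i • h' x).det := fun x => by
    obtain ⟨p, hp, hpdet⟩ := exists_polynomial_eval_eq_det_one_add_smul (h' x : E →ₗ[ℝ] E)
    simpa [hpdet, ContinuousLinearMap.det] using hvw p hp
  have hsum : ∑ i, w i = 1 := by simpa using (hvw 1 (by simp)).symm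
  have hint : ∀ t : ℝ, IntegrableOn (fun x => (1 + t • h' x).det) s μ := fun t =>
    (ContinuousLinearMap.continuous_det.comp_continuousOn
      (continuousOn_const.add (hh'.const_smul t))).integrableOn_compact hs
  simp_rw [hextrapolate]
  rw [integral_finsetSum _ fun i _ => (hint (v i)).const_mul (w i)]
  simp_rw [integral_const_mul, hsmall]
  rw [← Finset.sum_mul, hsum, one_mul]

section Rays

variable {V : Type*} [NormedAddCommGroup V] [InnerProductSpace ℝ V]

/-- A quarter of the discriminant of the quadratic equation `‖x + l • u‖ ^ 2 = R ^ 2` in `l`. -/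
def rayDiscriminant (R : ℝ) (x u : V) : ℝ :=
  inner ℝ x u ^ 2 + ‖u‖ ^ 2 * (R ^ 2 - ‖x‖ ^ 2)

/-- The larger root `l` of `‖x + l • u‖ ^ 2 = R ^ 2`: the time at which the ray from a point `x` of
the ball of radius `R` in the direction `u ≠ 0` leaves the ball. -/
def rayExitTime (R : ℝ) (x u : V) : ℝ :=
  (-inner ℝ x u + √(rayDiscriminant R x u)) / ‖u‖ ^ 2

theorem rayDiscriminant_nonneg {R : ℝ} {x : V} (hx : ‖x‖ ≤ R) (u : V) :
    0 ≤ rayDiscriminant R x u := by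
  have hsq : ‖x‖ ^ 2 ≤ R ^ 2 := by gcongr
  have := mul_nonneg (sq_nonneg ‖u‖) (sub_nonneg.2 hsq)
  exact add_nonneg (sq_nonneg _) this

theorem norm_add_rayExitTime_smul {R : ℝ} {x u : V} (hx : ‖x‖ ≤ R) (hu : u ≠ 0) :
    ‖x + rayExitTime R x u • u‖ = R := by
  have hu2 : ‖u‖ ^ 2 ≠ 0 := pow_ne_zero 2 (norm_ne_zero_iff.2 hu)
  have hroot : rayExitTime R x u * ‖u‖ ^ 2 + inner ℝ x u = √(rayDiscriminant R x u) := by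
    rw [rayExitTime, div_mul_cancel₀ _ hu2]
    ring
  have hsq := Real.sq_sqrt (rayDiscriminant_nonneg hx u)
  rw [← hroot, rayDiscriminant] at hsq
  refine (sq_eq_sq₀ (norm_nonneg _) ((norm_nonneg x).trans hx)).1 (mul_right_cancel₀ hu2 ?_)
  rw [norm_add_sq_real, inner_smul_right, norm_smul, mul_pow, Real.norm_eq_abs, sq_abs]
  linear_combination hsq

theorem rayExitTime_eq_zero {R : ℝ} {x u : V} (hx : ‖x‖ = R) (hu : 0 ≤ inner ℝ x u) :
    rayExitTime R x u = 0 := by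
  rw [rayExitTime, rayDiscriminant, hx, sub_self, mul_zero, add_zero, Real.sqrt_sq hu,
    neg_add_cancel, zero_div]

theorem contDiffAt_rayExitTime {R : ℝ} {u : V → V} {x : V} (hu : ContDiffAt ℝ 1 u x)
    (hu0 : u x ≠ 0) (hdisc : rayDiscriminant R x (u x) ≠ 0) :
    ContDiffAt ℝ 1 (fun y => rayExitTime R y (u y)) x := by
  have hinner : ContDiffAt ℝ 1 (fun y => inner ℝ y (u y)) x := contDiffAt_id.inner ℝ hu
  have hdisc_contDiff : ContDiffAt ℝ 1 (fun y => rayDiscriminant R y (u y)) x :=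
    (hinner.pow 2).add ((hu.norm_sq ℝ).mul (contDiffAt_const.sub (contDiffAt_id.norm_sq ℝ)))
  exact (hinner.neg.add (hdisc_contDiff.sqrt hdisc)).div (hu.norm_sq ℝ)
    (pow_ne_zero 2 (norm_ne_zero_iff.2 hu0))

theorem inner_self_sub_pos_of_norm_le {x y : V} (hxy : ‖y‖ ≤ ‖x‖) (hne : x ≠ y) :
    0 < inner ℝ x (x - y) := by
  have hpos := norm_pos_iff.2 (sub_ne_zero.2 hne)
  have hsq : ‖y‖ ^ 2 ≤ ‖x‖ ^ 2 := by gcongr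
  have hexpand := norm_sub_sq_real x y
  rw [inner_sub_right, real_inner_self_eq_norm_sq]
  nlinarith

theorem rayDiscriminant_sub_pos {R : ℝ} {x y : V} (hx : ‖x‖ ≤ R) (hy : ‖y‖ ≤ R) (hne : x ≠ y) :
    0 < rayDiscriminant R x (x - y) := by
  rcases hx.lt_or_eq with hlt | rfl
  · have hsq : ‖x‖ ^ 2 < R ^ 2 := by gcongr
    have hpos := norm_pos_iff.2 (sub_ne_zero.2 hne)
    exact add_pos_of_nonneg_of_pos (sq_nonneg _) (mul_pos (by positivity) (sub_pos.2 hsq))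
  · rw [rayDiscriminant, sub_self, mul_zero, add_zero]
    exact pow_pos (inner_self_sub_pos_of_norm_le hy hne) 2

end Rays

section Brouwer

open Metric

variable {V : Type*} [NormedAddCommGroup V] [InnerProductSpace ℝ V] [FiniteDimensional ℝ V]

theorem not_exists_contDiffAt_retraction_sphere {R : ℝ} (hR : 0 < R) :
    ¬ ∃ r : V → V, (∀ x ∈ closedBall 0 R, ContDiffAt ℝ 1 r x) ∧
      (∀ x ∈ closedBall 0 R, ‖r x‖ = R) ∧ ∀ x, ‖x‖ = R → r x = x := by
  rintro ⟨r, hr, hmaps, hfix⟩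
  borelize V
  let B := closedBall (0 : V) R
  have hderiv : ∀ x ∈ B, HasFDerivAt r (fderiv ℝ r x) x := fun x hx =>
    ((hr x hx).differentiableAt one_ne_zero).hasFDerivAt
  have hderiv_cont : ContinuousOn (fderiv ℝ r) B := fun x hx =>
    ((hr x hx).fderiv_right (m := 0) (by norm_num)).continuousAt.continuousWithinAt
  have hvolume : ∫ x in B, (1 + (fderiv ℝ r x - 1)).det = volume.real B := by
    refine setIntegral_det_one_add_of_contDiff volume (isCompact_closedBall 0 R)
      (convex_closedBall 0 R) (h := fun x => r x - x)
      (fun x hx => ((hderiv x hx).sub (hasFDerivAt_id x)).hasFDerivWithinAt)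
      (hderiv_cont.sub continuousOn_const) (fun x hx => ?_) (fun x hx => ?_)
    · rw [frontier_closedBall _ hR.ne', mem_sphere_zero_iff_norm] at hx
      rw [hfix x hx, sub_self]
    · rw [add_sub_cancel, mem_closedBall_zero_iff, hmaps x hx]
  have hdet_ball : EqOn (fun x => (fderiv ℝ r x).det) 0 (ball 0 R) := fun x hx =>
    det_fderiv_eq_zero_of_norm_eventuallyEq (hderiv x (ball_subset_closedBall hx)) hR.ne'
      (Filter.mem_of_superset (isOpen_ball.mem_nhds hx)
        fun y hy => hmaps y (ball_subset_closedBall hy))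
  have hdet : EqOn (fun x => (fderiv ℝ r x).det) 0 B :=
    hdet_ball.of_subset_closure (ContinuousLinearMap.continuous_det.comp_continuousOn hderiv_cont)
      continuousOn_const ball_subset_closedBall (closure_ball (0 : V) hR.ne').ge
  have hzero : ∫ x in B, (1 + (fderiv ℝ r x - 1)).det = 0 := by
    simp_rw [add_sub_cancel]
    rw [setIntegral_congr_fun isClosed_closedBall.measurableSet hdet]
    exact integral_zero _ _
  have hpos : 0 < volume.real B := ENNReal.toReal_pos
    (measure_closedBall_pos volume 0 hR).ne' (isCompact_closedBall 0 R).measure_lt_top.ne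
  exact hpos.ne (hzero.symm.trans hvolume)

theorem exists_isFixedPt_of_contDiff {R : ℝ} (hR : 0 < R) {g : V → V}
    (hg : ContDiff ℝ 1 g) (hmaps : MapsTo g (closedBall 0 R) (closedBall 0 R)) :
    ∃ x ∈ closedBall 0 R, g x = x := by
  by_contra! hne
  have hgR : ∀ x ∈ closedBall (0 : V) R, ‖g x‖ ≤ R := fun x hx => by simpa using hmaps hx
  -- The retraction follows the ray from `g x` through `x` until it meets the sphere.
  refine not_exists_contDiffAt_retraction_sphere hR
    ⟨fun x => x + rayExitTime R x (x - g x) • (x - g x), fun x hx => ?_, fun x hx => ?_,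
      fun x hx => ?_⟩
  · have hu : ContDiffAt ℝ 1 (fun y => y - g y) x := contDiffAt_id.sub hg.contDiffAt
    exact contDiffAt_id.add ((contDiffAt_rayExitTime hu (sub_ne_zero.2 (hne x hx).symm)
      (rayDiscriminant_sub_pos (by simpa using hx) (hgR x hx) (hne x hx).symm).ne').smul hu)
  · exact norm_add_rayExitTime_smul (by simpa using hx) (sub_ne_zero.2 (hne x hx).symm)
  · have hxR : x ∈ closedBall (0 : V) R := by simp [hx]
    simp only [rayExitTime_eq_zero hx (inner_self_sub_pos_of_norm_le ((hgR x hxR).trans hx.ge)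
      (hne x hxR).symm).le, zero_smul, add_zero]

theorem exists_norm_sub_lt_of_norm_le {g : V → V} (hg : Continuous g) {R : ℝ}
    (hgR : ∀ x, ‖g x‖ ≤ R) {ε : ℝ} (hε : 0 < ε) : ∃ x, ‖g x - x‖ < ε := by
  obtain ⟨k, hk, hkg, -⟩ := hg.exists_contDiff_approx 1 (ε := fun _ => ε) continuous_const
    fun _ => hε
  have hR : 0 ≤ R := (norm_nonneg _).trans (hgR 0)
  have hmaps : ∀ x, ‖k x‖ ≤ R + ε := fun x => by
    have := norm_le_norm_add_norm_sub (g x) (k x)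
    rw [norm_sub_rev, ← dist_eq_norm] at this
    linarith [hkg x, hgR x]
  obtain ⟨x, -, hx⟩ := exists_isFixedPt_of_contDiff (add_pos_of_nonneg_of_pos hR hε) hk
    fun x _ => by simpa using hmaps x
  have hlt := hkg x
  rw [hx, dist_comm, dist_eq_norm] at hlt
  exact ⟨x, hlt⟩

end Brouwer

/-! ### The Schauder–Tychonoff fixed point theorem -/

theorem exists_isFixedPt_of_forall_sub_mem {E : Type*} [AddCommGroup E] [TopologicalSpace E]
    [IsTopologicalAddGroup E] [T2Space E] {K : Set E} (hK : IsCompact K) {T : K → K}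
    (hT : Continuous T) (happrox : ∀ U ∈ nhds (0 : E), ∃ x, (T x - x : E) ∈ U) :
    ∃ x, Function.IsFixedPt T x := by
  have : CompactSpace K := isCompact_iff_compactSpace.1 hK
  have hclosed : IsClosed (range fun x : K => (T x - x : E)) :=
    (isCompact_range ((continuous_subtype_val.comp hT).sub continuous_subtype_val)).isClosed
  have hzero : (0 : E) ∈ closure (range fun x : K => (T x - x : E)) :=
    mem_closure_iff_nhds.2 fun U hU =>
      let ⟨x, hx⟩ := happrox U hU
      ⟨_, hx, x, rfl⟩
  rw [hclosed.closure_eq] at hzero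
  obtain ⟨x, hx⟩ := hzero
  exact ⟨x, Subtype.ext (sub_eq_zero.1 hx)⟩

theorem exists_lipschitzWith_one_retraction {V : Type*} [NormedAddCommGroup V]
    [InnerProductSpace ℝ V] {K : Set V} (hK : IsComplete K) (hconv : Convex ℝ K)
    (hne : K.Nonempty) : ∃ P : V → K, LipschitzWith 1 P ∧ ∀ x : K, P x = x := by
  choose P hPK hP using fun x => exists_norm_eq_iInf_of_complete_convex hne hK hconv x
  have hinner : ∀ x, ∀ z ∈ K, inner ℝ (x - P x) (z - P x) ≤ 0 := fun x =>
    (norm_eq_iInf_iff_real_inner_le_zero hconv (hPK x)).1 (hP x)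
  refine ⟨fun x => ⟨P x, hPK x⟩, LipschitzWith.of_dist_le_mul fun x y => ?_, fun x => ?_⟩
  · rw [NNReal.coe_one, one_mul, Subtype.dist_eq, dist_eq_norm, dist_eq_norm]
    have hx := hinner x (P y) (hPK y)
    have hy := hinner y (P x) (hPK x)
    have hsq : ‖P x - P y‖ * ‖P x - P y‖ ≤ ‖x - y‖ * ‖P x - P y‖ := calc
      ‖P x - P y‖ * ‖P x - P y‖ = inner ℝ (P x - P y) (P x - P y) :=
        (real_inner_self_eq_norm_mul_norm _).symm
      _ = inner ℝ (x - y) (P x - P y) + inner ℝ (x - P x) (P y - P x)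
            + inner ℝ (y - P y) (P x - P y) := by
        simp only [inner_sub_left, inner_sub_right]
        ring
      _ ≤ inner ℝ (x - y) (P x - P y) := by linarith
      _ ≤ ‖x - y‖ * ‖P x - P y‖ := real_inner_le_norm _ _
    rcases (norm_nonneg (P x - P y)).eq_or_lt with h | h
    · exact h ▸ norm_nonneg _
    · exact le_of_mul_le_mul_right hsq h
  · have hself := hinner x x x.2
    exact Subtype.ext (sub_eq_zero.1 (real_inner_self_nonpos.1 hself)).symm

theorem exists_isFixedPt_of_isCompact_convex_of_innerProductSpace {V : Type*}
    [NormedAddCommGroup V] [InnerProductSpace ℝ V] [FiniteDimensional ℝ V] {K : Set V}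
    (hK : IsCompact K) (hconv : Convex ℝ K) (hne : K.Nonempty) {g : K → K} (hg : Continuous g) :
    ∃ x, Function.IsFixedPt g x := by
  obtain ⟨P, hP, hPK⟩ := exists_lipschitzWith_one_retraction hK.isComplete hconv hne
  obtain ⟨R, hR⟩ := hK.isBounded.exists_norm_le
  refine exists_isFixedPt_of_forall_sub_mem hK hg fun U hU => ?_
  obtain ⟨ε, hε, hεU⟩ := Metric.mem_nhds_iff.1 hU
  obtain ⟨x, hx⟩ := exists_norm_sub_lt_of_norm_le (g := fun x => (g (P x) : V))
    (continuous_subtype_val.comp (hg.comp hP.continuous)) (fun x => hR _ (g (P x)).2) hε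
  refine ⟨P x, hεU (mem_ball_zero_iff.2 ?_)⟩
  calc ‖(g (P x) - P x : V)‖ = dist (P (g (P x))) (P x) := by
        rw [hPK, Subtype.dist_eq, dist_eq_norm]
    _ ≤ dist (g (P x) : V) x := by simpa using hP.dist_le_mul (g (P x)) x
    _ < ε := by rwa [dist_eq_norm]

theorem exists_isFixedPt_of_isCompact_convex_of_finiteDimensional {E : Type*} [AddCommGroup E]
    [Module ℝ E] [TopologicalSpace E] [IsTopologicalAddGroup E] [ContinuousSMul ℝ E] [T2Space E]
    [FiniteDimensional ℝ E] {K : Set E} (hK : IsCompact K) (hconv : Convex ℝ K)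
    (hne : K.Nonempty) {g : K → K} (hg : Continuous g) : ∃ x, Function.IsFixedPt g x := by
  let e : K ≃ₜ toEuclidean '' K := toEuclidean.toHomeomorph.image K
  obtain ⟨y, hy⟩ := exists_isFixedPt_of_isCompact_convex_of_innerProductSpace
    (hK.image toEuclidean.continuous) (hconv.linear_image toEuclidean.toLinearMap)
    (hne.image toEuclidean) (g := e ∘ g ∘ e.symm) (e.continuous.comp (hg.comp e.symm.continuous))
  exact ⟨e.symm y, e.injective (by rw [e.apply_symm_apply]; exact hy)⟩

theorem exists_finset_continuous_stdSimplex_subordinate {E : Type*} [AddCommGroup E]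
    [TopologicalSpace E] [IsTopologicalAddGroup E] [T2Space E] {K W : Set E} (hK : IsCompact K)
    (hW : W ∈ nhds 0) :
    ∃ (s : Finset K) (φ : K → stdSimplex ℝ s), Continuous φ ∧
      ∀ x i, (φ x : s → ℝ) i ≠ 0 → (i - x : E) ∈ W := by
  have : CompactSpace K := isCompact_iff_compactSpace.1 hK
  let O : K → Set K := fun y => {x | (y - x : E) ∈ interior W}
  have hO : ∀ y, IsOpen (O y) := fun y =>
    isOpen_interior.preimage (continuous_const.sub continuous_subtype_val)
  have hmem : ∀ x, x ∈ O x := fun x => by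
    rw [mem_ofPred_eq, sub_self]
    exact mem_interior_iff_mem_nhds.2 hW
  obtain ⟨s, hs⟩ := isCompact_univ.elim_finite_subcover O hO fun x _ => mem_iUnion.2 ⟨x, hmem x⟩
  obtain ⟨φ, hφ⟩ := PartitionOfUnity.exists_isSubordinate (isClosed_univ (X := K))
    (fun i : s => O i) (fun i => hO i) fun x hx =>
      let ⟨y, hy, hxy⟩ := mem_iUnion₂.1 (hs hx)
      mem_iUnion.2 ⟨⟨y, hy⟩, hxy⟩
  have hsum : ∀ x, ∑ i, φ i x = 1 := fun x => by
    rw [← finsum_eq_sum_of_fintype, φ.sum_eq_one (mem_univ x)]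
  exact ⟨s, fun x => ⟨fun i => φ i x, fun i => φ.nonneg i x, hsum x⟩,
    (continuous_pi fun i => (φ i).continuous).subtype_mk _,
    fun x i hi => interior_subset (hφ i (subset_tsupport _ hi))⟩

theorem exists_isFixedPt_of_isCompact_convex {E : Type*} [AddCommGroup E] [Module ℝ E]
    [TopologicalSpace E] [IsTopologicalAddGroup E] [ContinuousSMul ℝ E] [LocallyConvexSpace ℝ E]
    [T2Space E] {K : Set E} (hK : IsCompact K) (hconv : Convex ℝ K) (hne : K.Nonempty)
    {T : K → K} (hT : Continuous T) : ∃ x, Function.IsFixedPt T x := by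
  refine exists_isFixedPt_of_forall_sub_mem hK hT fun U hU => ?_
  obtain ⟨W, ⟨hW, hWconv⟩, hWU⟩ :=
    (LocallyConvexSpace.convex_basis_zero ℝ E).mem_iff.1 (by simpa using neg_mem_nhds_zero E hU)
  obtain ⟨s, φ, hφ, hφW⟩ := exists_finset_continuous_stdSimplex_subordinate hK hW
  let c : stdSimplex ℝ s → K := fun w => ⟨∑ i, w.1 i • (i : E),
    hconv.sum_mem (fun i _ => w.2.1 i) w.2.2 fun i _ => i.1.2⟩
  have hc : Continuous c := Continuous.subtype_mk (continuous_finsetSum _ fun i _ =>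
    ((continuous_apply i).comp continuous_subtype_val).smul continuous_const) _
  obtain ⟨w, hw⟩ := exists_isFixedPt_of_isCompact_convex_of_finiteDimensional
    (isCompact_stdSimplex ℝ s) (convex_stdSimplex ℝ s) ⟨φ ⟨_, hne.some_mem⟩, Subtype.coe_prop _⟩
    (hφ.comp (hT.comp hc))
  have hmem : ∑ i, w.1 i • ((i : E) - T (c w)) ∈ W := by
    rw [← finsum_eq_sum_of_fintype]
    refine hWconv.finsum_mem w.2.1 ?_ fun i hi => hφW _ i ?_
    · rw [finsum_eq_sum_of_fintype, w.2.2]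
    · rwa [show φ (T (c w)) = w from hw]
  have hsum : ∑ i, w.1 i • ((i : E) - T (c w)) = c w - T (c w) := by
    simp only [smul_sub, Finset.sum_sub_distrib, ← Finset.sum_smul, w.2.2, one_smul, c]
  rw [hsum] at hmem
  exact ⟨c w, by simpa using hWU hmem⟩

/-! ### The nonlocal problem -/

section NonlocalProblem

variable {ι X : Type*} [TopologicalSpace X]

theorem continuousOn_univ_prod_Ico {Y : Type*} [TopologicalSpace Y] {F : X × ℝ → Y} {a b : ℝ}
    (hF : ∀ T ∈ Ico a b, ContinuousOn F (univ ×ˢ Icc a T)) :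
    ContinuousOn F (univ ×ˢ Ico a b) := by
  rintro ⟨p, t⟩ ⟨-, ht⟩
  obtain ⟨T, htT, hTb⟩ := exists_between ht.2
  refine (hF T ⟨ht.1.trans htT.le, hTb⟩ (p, t) ⟨mem_univ p, ht.1, htT.le⟩).mono_of_mem_nhdsWithin ?_
  filter_upwards [self_mem_nhdsWithin,
    mem_nhdsWithin_of_mem_nhds (continuous_snd.continuousAt.preimage_mem_nhds (Iio_mem_nhds htT))]
    with q hq hqT using ⟨mem_univ _, hq.2.1, le_of_lt hqT⟩

theorem continuousOn_parametric_primitive {E : Type*} [NormedAddCommGroup E] [NormedSpace ℝ E]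
    {g : X → ℝ → E} {a b : ℝ} (hg : ContinuousOn (Function.uncurry g) (univ ×ˢ Ico a b)) :
    ContinuousOn (fun q : X × ℝ => ∫ s in a..q.2, g q.1 s) (univ ×ˢ Ico a b) := by
  refine continuousOn_univ_prod_Ico fun T hT => ?_
  have hext : Continuous fun q : (X × ℝ) × ℝ => g q.1.1 (projIcc a T hT.1 q.2) :=
    hg.comp_continuous (f := fun q : (X × ℝ) × ℝ => (q.1.1, (projIcc a T hT.1 q.2 : ℝ)))
      (by fun_prop) fun q => ⟨mem_univ _, Icc_subset_Ico_right hT.2 (Subtype.coe_prop _)⟩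
  have hprim : Continuous fun q : X × ℝ => ∫ s in a..q.2, g q.1 (projIcc a T hT.1 s) :=
    intervalIntegral.continuous_parametric_intervalIntegral_of_continuous
      (f := fun (q : X × ℝ) s => g q.1 (projIcc a T hT.1 s)) hext continuous_snd
  refine hprim.continuousOn.congr fun q hq => intervalIntegral.integral_congr fun s hs => ?_
  rw [uIcc_of_le hq.2.1] at hs
  rw [projIcc_of_mem hT.1 (Icc_subset_Icc_right hq.2.2 hs)]

theorem intervalIntegrable_of_continuousOn_Ico {E : Type*} [NormedAddCommGroup E] {g : ℝ → E}
    {a b s t : ℝ} (hg : ContinuousOn g (Ico a b)) (hs : s ∈ Ico a b) (ht : t ∈ Ico a b) :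
    IntervalIntegrable g volume s t :=
  (hg.mono (ordConnected_Ico.uIcc_subset hs ht)).intervalIntegrable

theorem hasDerivWithinAt_primitive_Ico {E : Type*} [NormedAddCommGroup E] [NormedSpace ℝ E]
    [CompleteSpace E] {g : ℝ → E} {a b t : ℝ} (hg : ContinuousOn g (Ico a b))
    (ht : t ∈ Ico a b) :
    HasDerivWithinAt (fun u => ∫ s in a..u, g s) (g t) (Ico a b) t := by
  obtain ⟨T, htT, hTb⟩ := exists_between ht.2
  have htmem : t ∈ Icc a T := ⟨ht.1, htT.le⟩
  have hgT : ContinuousOn g (Icc a T) := hg.mono (Icc_subset_Ico_right hTb)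
  have : Fact (t ∈ Icc a T) := ⟨htmem⟩
  refine (intervalIntegral.integral_hasDerivWithinAt_right (s := Icc a T)
    (intervalIntegrable_of_continuousOn_Ico hg ⟨le_rfl, ht.1.trans_lt ht.2⟩ ht)
    (hgT.stronglyMeasurableAtFilter_nhdsWithin measurableSet_Icc t)
    (hgT t htmem)).mono_of_mem_nhdsWithin ?_
  filter_upwards [self_mem_nhdsWithin, mem_nhdsWithin_of_mem_nhds (Iio_mem_nhds htT)]
    with u hu huT using ⟨hu.1, le_of_lt huT⟩

/-- The superposition (Nemytskii) operator of the right-hand side `f`, acting on families of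
curves. -/
def superposition (f : ι → ℝ → (ι → ℝ) → ℝ) (x : ι → ℝ → ℝ) (i : ι) (s : ℝ) : ℝ :=
  f i s fun j => x j s

/-- The primitive of `g` vanishing at `0`, as an element of the domain of the functionals `α i`.
It is the constant `0` unless the primitive is continuous on `[0, t₀]`. -/
def primitive (t₀ : ℝ) (g : ℝ → ℝ) : C(Icc (0 : ℝ) t₀, ℝ) :=
  ContinuousMap.mkD ((Icc 0 t₀).domRestrict fun t => ∫ s in (0 : ℝ)..t, g s) 0

/-- The only possible initial value of a curve `w` with `w' = g` on `[0, t₀]` and `w 0 = α w`. -/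
def nonlocalValue {t₀ : ℝ} (α : C(Icc (0 : ℝ) t₀, ℝ) →L[ℝ] ℝ) (g : ℝ → ℝ) : ℝ :=
  (1 - α 1)⁻¹ * α (primitive t₀ g)

/-- The integral operator whose fixed points are the solutions of the nonlocal problem on
`[0, b)`. Its values are extended by `0`, so that it acts on curves defined on all of `ℝ`. -/
def integralOperator (b : ℝ) {t₀ : ℝ} (f : ι → ℝ → (ι → ℝ) → ℝ)
    (α : ι → C(Icc (0 : ℝ) t₀, ℝ) →L[ℝ] ℝ) (x : ι → ℝ → ℝ) (i : ι) : ℝ → ℝ :=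
  (Ico 0 b).indicator fun t =>
    nonlocalValue (α i) (superposition f x i) + ∫ s in (0 : ℝ)..t, superposition f x i s

/-- The families of curves, extended by `0` outside `[0, b)`, whose `i`-th member is Lipschitz with
constant `L i T` on `[0, T]`, for every `T < b`. -/
def lipschitzCurves (b : ℝ) (L : ι → ℝ → NNReal) : Set (ι → ℝ → ℝ) :=
  {x | (∀ i, ∀ t ∉ Ico 0 b, x i t = 0) ∧
    ∀ i, ∀ T ∈ Ico 0 b, LipschitzOnWith (L i T) (x i) (Icc 0 T)}

variable {b t₀ : ℝ} {f : ι → ℝ → (ι → ℝ) → ℝ} {α : ι → C(Icc (0 : ℝ) t₀, ℝ) →L[ℝ] ℝ}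
  {L : ι → ℝ → NNReal}

theorem continuousOn_superposition
    (hf : ∀ i, ContinuousOn (fun q : ℝ × (ι → ℝ) => f i q.1 q.2) (Ico 0 b ×ˢ univ))
    {y : X → ι → ℝ → ℝ}
    (hy : ∀ i, ContinuousOn (fun q : X × ℝ => y q.1 i q.2) (univ ×ˢ Ico 0 b)) (i : ι) :
    ContinuousOn (fun q : X × ℝ => superposition f (y q.1) i q.2) (univ ×ˢ Ico 0 b) :=
  (hf i).comp (f := fun q : X × ℝ => (q.2, fun j => y q.1 j q.2))
    (continuousOn_snd.prodMk (continuousOn_pi.2 hy)) fun _ hq => ⟨hq.2, mem_univ _⟩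

theorem continuousOn_superposition_Ico
    (hf : ∀ i, ContinuousOn (fun q : ℝ × (ι → ℝ) => f i q.1 q.2) (Ico 0 b ×ˢ univ))
    {x : ι → ℝ → ℝ} (hx : ∀ i, ContinuousOn (x i) (Ico 0 b)) (i : ι) :
    ContinuousOn (superposition f x i) (Ico 0 b) :=
  (hf i).comp (continuousOn_id.prodMk (continuousOn_pi.2 hx)) fun _ hs => ⟨hs, mem_univ _⟩

theorem primitive_apply {g : ℝ → ℝ} (hg : ContinuousOn g (Icc 0 t₀)) (t : Icc (0 : ℝ) t₀) :
    primitive t₀ g t = ∫ s in (0 : ℝ)..t, g s := by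
  have huIcc : uIcc 0 t₀ = Icc 0 t₀ := uIcc_of_le (t.2.1.trans t.2.2)
  have hcont : ContinuousOn (fun t => ∫ s in (0 : ℝ)..t, g s) (Icc 0 t₀) :=
    huIcc ▸ intervalIntegral.continuousOn_primitive_interval (huIcc ▸ hg.integrableOn_Icc)
  rw [primitive, ContinuousMap.mkD_apply_of_continuousOn hcont]

theorem apply_eq_nonlocalValue {α : C(Icc (0 : ℝ) t₀, ℝ) →L[ℝ] ℝ} (hα : α 1 ≠ 1) {g : ℝ → ℝ}
    (hg : ContinuousOn g (Icc 0 t₀)) {w : C(Icc (0 : ℝ) t₀, ℝ)}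
    (hw : ∀ t, w t = nonlocalValue α g + ∫ s in (0 : ℝ)..t, g s) : α w = nonlocalValue α g := by
  have hw_eq : w = nonlocalValue α g • 1 + primitive t₀ g := by
    ext t
    simp [hw, primitive_apply hg]
  have hprim : α (primitive t₀ g) = (1 - α 1) * nonlocalValue α g :=
    (mul_inv_cancel_left₀ (sub_ne_zero.2 hα.symm) _).symm
  calc α w = nonlocalValue α g * α 1 + (1 - α 1) * nonlocalValue α g := by
        rw [hw_eq, map_add, map_smul, hprim, smul_eq_mul]
    _ = nonlocalValue α g := by ring

theorem abs_nonlocalValue_le {α : C(Icc (0 : ℝ) t₀, ℝ) →L[ℝ] ℝ} {g : ℝ → ℝ} {Q : ℝ} (hQ : 0 ≤ Q)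
    (hg : ContinuousOn g (Icc 0 t₀)) (hgQ : ∀ t ∈ Icc 0 t₀, ‖∫ s in (0 : ℝ)..t, g s‖ ≤ Q) :
    |nonlocalValue α g| ≤ |(1 - α 1)⁻¹| * (‖α‖ * Q) := by
  have hnorm : ‖primitive t₀ g‖ ≤ Q :=
    (ContinuousMap.norm_le _ hQ).2 fun t => by
      rw [primitive_apply hg]
      exact hgQ t t.2
  rw [nonlocalValue, abs_mul]
  gcongr
  exact α.le_of_opNorm_le_of_le le_rfl hnorm

theorem continuous_integralOperator
    (hf : ∀ i, ContinuousOn (fun q : ℝ × (ι → ℝ) => f i q.1 q.2) (Ico 0 b ×ˢ univ))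
    (ht₀b : t₀ < b) {y : X → ι → ℝ → ℝ}
    (hy : ∀ i, ContinuousOn (fun q : X × ℝ => y q.1 i q.2) (univ ×ˢ Ico 0 b)) :
    Continuous fun p => integralOperator b f α (y p) := by
  refine continuous_pi fun i => continuous_pi fun t => ?_
  have hprim := continuousOn_parametric_primitive (g := fun p => superposition f (y p) i)
    (continuousOn_superposition hf hy i)
  by_cases ht : t ∈ Ico 0 b
  · simp only [integralOperator, indicator_of_mem ht]
    have hmap : Continuous fun p => primitive t₀ (superposition f (y p) i) :=
      ContinuousMap.continuous_mkD_restrict_of_uncurry _ _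
        (hprim.mono (prod_mono_right (Icc_subset_Ico_right ht₀b)))
    exact (continuous_const.mul ((α i).continuous.comp hmap)).add
      (hprim.comp_continuous (f := fun p => (p, t)) (by fun_prop) fun _ => ⟨mem_univ _, ht⟩)
  · simpa only [integralOperator, indicator_of_notMem ht] using continuous_const

theorem isClosed_lipschitzCurves : IsClosed (lipschitzCurves b L) := by
  simp only [lipschitzCurves, ofPred_and, ofPred_forall]
  refine IsClosed.inter ?_ ?_
  · exact isClosed_iInter fun i => isClosed_iInter fun t => isClosed_iInter fun _ =>
      isClosed_eq (by fun_prop) continuous_const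
  · exact isClosed_iInter fun i => isClosed_iInter fun T => isClosed_iInter fun _ =>
      (isClosed_setOfPred_lipschitzOnWith (L i T) (Icc 0 T)).preimage
        (continuous_apply (A := fun _ => ℝ → ℝ) i)

theorem convex_lipschitzCurves : Convex ℝ (lipschitzCurves b L) := by
  intro x hx y hy p q hp hq hpq
  refine ⟨fun i t ht => by simp [hx.1 i t ht, hy.1 i t ht], fun i T hT => ?_⟩
  refine LipschitzOnWith.of_dist_le_mul fun s hs t ht => ?_
  have hxst := (hx.2 i T hT).dist_le_mul s hs t ht
  have hyst := (hy.2 i T hT).dist_le_mul s hs t ht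
  calc dist (p * x i s + q * y i s) (p * x i t + q * y i t)
      ≤ dist (p * x i s) (p * x i t) + dist (q * y i s) (q * y i t) := dist_add_add_le _ _ _ _
    _ = p * dist (x i s) (x i t) + q * dist (y i s) (y i t) := by
      simp only [← smul_eq_mul, dist_smul₀, Real.norm_of_nonneg, hp, hq]
    _ ≤ p * (L i T * dist s t) + q * (L i T * dist s t) := by gcongr
    _ = L i T * dist s t := by rw [← add_mul, hpq, one_mul]

theorem zero_mem_lipschitzCurves : (0 : ι → ℝ → ℝ) ∈ lipschitzCurves b L :=
  ⟨fun _ _ _ => rfl, fun _ _ _ => (LipschitzWith.const' 0).lipschitzOnWith⟩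

theorem continuousOn_eval_of_mem_lipschitzCurves {y : X → ι → ℝ → ℝ} (hy : Continuous y)
    (hyL : ∀ p, y p ∈ lipschitzCurves b L) (i : ι) :
    ContinuousOn (fun q : X × ℝ => y q.1 i q.2) (univ ×ˢ Ico 0 b) :=
  continuousOn_univ_prod_Ico fun T hT =>
    continuousOn_prod_of_continuousOn_lipschitzOnWith' _ (L i T)
      (fun p _ => (hyL p).2 i T hT) fun t _ => ((continuous_apply_apply i t).comp hy).continuousOn

theorem continuousOn_of_mem_lipschitzCurves {x : ι → ℝ → ℝ} (hx : x ∈ lipschitzCurves b L)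
    (i : ι) : ContinuousOn (x i) (Ico 0 b) :=
  (continuousOn_eval_of_mem_lipschitzCurves (continuous_const (X := Unit)) (fun _ => hx) i).comp
    (f := fun t => ((), t)) (by fun_prop) fun _ ht => ⟨mem_univ _, ht⟩

theorem isCompact_inter_lipschitzCurves {D : Set (ι → ℝ → ℝ)} (hD : IsClosed D)
    (hbdd : ∀ i, ∀ t ∈ Ico 0 b, ∃ R, ∀ x ∈ D, |x i t| ≤ R) :
    IsCompact (D ∩ lipschitzCurves b L) := by
  have hbdd' : ∀ i t, ∃ R, ∀ x ∈ D ∩ lipschitzCurves b L, |x i t| ≤ R := fun i t => by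
    by_cases ht : t ∈ Ico 0 b
    · exact (hbdd i t ht).imp fun R hR x hx => hR x hx.1
    · exact ⟨0, fun x hx => by simp [hx.2.1 i t ht]⟩
  choose R hR using hbdd'
  exact (isCompact_univ_pi fun i => isCompact_univ_pi fun t =>
    isCompact_Icc (a := -R i t) (b := R i t)).of_isClosed_subset
      (hD.inter isClosed_lipschitzCurves) fun x hx i _ t _ => abs_le.1 (hR i t x hx)

theorem integralOperator_mem_lipschitzCurves
    (hf : ∀ i, ContinuousOn (fun q : ℝ × (ι → ℝ) => f i q.1 q.2) (Ico 0 b ×ˢ univ))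
    {x : ι → ℝ → ℝ} (hx : ∀ i, ContinuousOn (x i) (Ico 0 b))
    (hL : ∀ i, ∀ T ∈ Ico 0 b, ∀ s ∈ Icc 0 T, |superposition f x i s| ≤ L i T) :
    integralOperator b f α x ∈ lipschitzCurves b L := by
  refine ⟨fun i t ht => indicator_of_notMem ht _, fun i T hT => ?_⟩
  refine LipschitzOnWith.of_dist_le_mul fun t ht s hs => ?_
  have hsub : Icc 0 T ⊆ Ico 0 b := Icc_subset_Ico_right hT.2
  have hzero : (0 : ℝ) ∈ Ico 0 b := ⟨le_rfl, hT.1.trans_lt hT.2⟩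
  have hint := fun u (hu : u ∈ Icc 0 T) =>
    intervalIntegrable_of_continuousOn_Ico (continuousOn_superposition_Ico hf hx i) hzero (hsub hu)
  rw [integralOperator, indicator_of_mem (hsub hs), indicator_of_mem (hsub ht), dist_add_left,
    dist_eq_norm, intervalIntegral.integral_interval_sub_left (hint t ht) (hint s hs),
    Real.dist_eq]
  exact intervalIntegral.norm_integral_le_of_norm_le_const fun r hr =>
    hL i T hT r (ordConnected_Icc.uIcc_subset hs ht (uIoc_subset_uIcc hr))

theorem exists_forall_abs_superposition_le
    (hf : ∀ i, ContinuousOn (fun q : ℝ × (ι → ℝ) => f i q.1 q.2) (Ico 0 b ×ˢ univ))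
    {D : Set (ι → ℝ → ℝ)} {T : ℝ} (hT : T < b)
    (hbdd : ∀ i, ∃ R, ∀ x ∈ D, ∀ t ∈ Icc 0 T, |x i t| ≤ R) (i : ι) :
    ∃ M : NNReal, ∀ x ∈ D, ∀ s ∈ Icc 0 T, |superposition f x i s| ≤ M := by
  choose R hR using hbdd
  have hbox : IsCompact (Icc 0 T ×ˢ pi univ fun j => Icc (-R j) (R j)) :=
    isCompact_Icc.prod (isCompact_univ_pi fun _ => isCompact_Icc)
  obtain ⟨M, hM⟩ := hbox.exists_bound_of_continuousOn
    ((hf i).mono (prod_mono (Icc_subset_Ico_right hT) (subset_univ _)))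
  exact ⟨M.toNNReal, fun x hx s hs =>
    (hM (s, fun j => x j s) ⟨hs, fun j _ => abs_le.1 (hR j x hx s hs)⟩).trans
      (Real.le_coe_toNNReal M)⟩

theorem exists_isFixedPt_integralOperator
    (hf : ∀ i, ContinuousOn (fun q : ℝ × (ι → ℝ) => f i q.1 q.2) (Ico 0 b ×ˢ univ))
    (ht₀b : t₀ < b) {D : Set (ι → ℝ → ℝ)} (hclosed : IsClosed D) (hconv : Convex ℝ D)
    (hzero : 0 ∈ D) (hbdd : ∀ i, ∀ T ∈ Ico 0 b, ∃ R, ∀ x ∈ D, ∀ t ∈ Icc 0 T, |x i t| ≤ R)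
    (hmaps : ∀ x ∈ D, (∀ i, ContinuousOn (x i) (Ico 0 b)) → integralOperator b f α x ∈ D) :
    ∃ x, (∀ i, ContinuousOn (x i) (Ico 0 b)) ∧
      Function.IsFixedPt (integralOperator b f α) x := by
  choose! L hL using fun i T (hT : T ∈ Ico 0 b) =>
    exists_forall_abs_superposition_le hf hT.2 (fun j => hbdd j T hT) i
  let K := D ∩ lipschitzCurves b L
  have hK : IsCompact K := isCompact_inter_lipschitzCurves hclosed fun i t ht =>
    (hbdd i t ht).imp fun R hR x hx => hR x hx t ⟨ht.1, le_rfl⟩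
  have hmapsK : ∀ x ∈ K, integralOperator b f α x ∈ K := fun x hx =>
    have hxc := continuousOn_of_mem_lipschitzCurves hx.2
    ⟨hmaps x hx.1 hxc, integralOperator_mem_lipschitzCurves hf hxc fun i T hT => hL i T hT x hx.1⟩
  have hcont : Continuous fun x : K => integralOperator b f α x :=
    continuous_integralOperator hf ht₀b
      (continuousOn_eval_of_mem_lipschitzCurves continuous_subtype_val fun x => x.2.2)
  obtain ⟨x, hx⟩ := exists_isFixedPt_of_isCompact_convex hK (hconv.inter convex_lipschitzCurves)
    ⟨0, hzero, zero_mem_lipschitzCurves⟩ (hcont.subtype_mk fun x => hmapsK x x.2)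
  exact ⟨x, continuousOn_of_mem_lipschitzCurves x.2.2, congrArg Subtype.val hx⟩

theorem hasDerivWithinAt_of_isFixedPt_integralOperator
    (hf : ∀ i, ContinuousOn (fun q : ℝ × (ι → ℝ) => f i q.1 q.2) (Ico 0 b ×ˢ univ))
    {x : ι → ℝ → ℝ} (hx : ∀ i, ContinuousOn (x i) (Ico 0 b))
    (hfix : Function.IsFixedPt (integralOperator b f α) x) (i : ι) {t : ℝ} (ht : t ∈ Ico 0 b) :
    HasDerivWithinAt (x i) (f i t fun j => x j t) (Ico 0 b) t := by
  have hderiv := (hasDerivWithinAt_primitive_Ico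
    (continuousOn_superposition_Ico hf hx i) ht).const_add
      (nonlocalValue (α i) (superposition f x i))
  refine hderiv.congr_of_mem (fun s hs => ?_) ht
  rw [← congrFun (congrFun hfix i) s, integralOperator, indicator_of_mem hs]

theorem eq_apply_of_isFixedPt_integralOperator
    (hf : ∀ i, ContinuousOn (fun q : ℝ × (ι → ℝ) => f i q.1 q.2) (Ico 0 b ×ˢ univ))
    (hb : 0 < b) (ht₀b : t₀ < b) {x : ι → ℝ → ℝ} (hx : ∀ i, ContinuousOn (x i) (Ico 0 b))
    (hfix : Function.IsFixedPt (integralOperator b f α) x) {i : ι} (hα : α i 1 ≠ 1)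
    {w : C(Icc (0 : ℝ) t₀, ℝ)} (hw : ∀ t, w t = x i t) : x i 0 = α i w := by
  have hx_eq : ∀ t ∈ Ico 0 b, x i t =
      nonlocalValue (α i) (superposition f x i) + ∫ s in (0 : ℝ)..t, superposition f x i s :=
    fun t ht => by
      conv_lhs => rw [← congrFun (congrFun hfix i) t, integralOperator, indicator_of_mem ht]
  rw [hx_eq 0 ⟨le_rfl, hb⟩, intervalIntegral.integral_same, add_zero]
  have hsub : Icc 0 t₀ ⊆ Ico 0 b := Icc_subset_Ico_right ht₀b
  exact (apply_eq_nonlocalValue hα ((continuousOn_superposition_Ico hf hx i).mono hsub)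
    fun t => (hw t).trans (hx_eq t (hsub t.2))).symm

end NonlocalProblem

/-! ### A priori bounds -/

section APrioriBounds

theorem abs_le_semS {N i : ℕ} (hi : i < N) (x : ℕ → ℝ) : |x i| ≤ semS N x :=
  le_ciSup (f := fun i : Fin N => |x i|) (Set.finite_range _).bddAbove ⟨i, hi⟩

theorem semS_nonneg (N : ℕ) (x : ℕ → ℝ) : 0 ≤ semS N x :=
  Real.iSup_nonneg fun _ => abs_nonneg _

theorem semS_le {N : ℕ} {x : ℕ → ℝ} {M : ℝ} (hM : 0 ≤ M) (hx : ∀ i < N, |x i| ≤ M) :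
    semS N x ≤ M :=
  Real.iSup_le (fun i => hx i i.2) hM

theorem exists_nonneg_mul_add_eq_self {q r : ℝ} (hq : q < 1) (hr : 0 ≤ r) :
    ∃ R, 0 ≤ R ∧ q * R + r = R := by
  have hq' : 0 < 1 - q := sub_pos.2 hq
  exact ⟨r / (1 - q), div_nonneg hr hq'.le, by field_simp; ring⟩

/-- The a priori bound for solutions: the constant `R` up to time `t₀`, continued by the solution
of `M' = C (M + 1)`. -/
def envelope (R C t₀ t : ℝ) : ℝ := (R + 1) * Real.exp (C * max (t - t₀) 0) - 1

variable {R C t₀ : ℝ}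

theorem envelope_of_le {t : ℝ} (ht : t ≤ t₀) : envelope R C t₀ t = R := by
  simp [envelope, max_eq_right (sub_nonpos.2 ht)]

theorem monotone_envelope (hR : 0 ≤ R) (hC : 0 ≤ C) : Monotone (envelope R C t₀) := by
  intro s t hst
  unfold envelope
  gcongr

theorem envelope_nonneg (hR : 0 ≤ R) (hC : 0 ≤ C) (t : ℝ) : 0 ≤ envelope R C t₀ t := calc
  0 ≤ R := hR
  _ = envelope R C t₀ (min t t₀) := (envelope_of_le (min_le_right t t₀)).symm
  _ ≤ envelope R C t₀ t := monotone_envelope hR hC (min_le_left t t₀)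

variable {E : Type*} [NormedAddCommGroup E] [NormedSpace ℝ E]

theorem norm_integral_le_of_norm_le_mul_add {g : ℝ → E} {A : ℝ → ℝ} {B t : ℝ} (hR : 0 ≤ R)
    (hB : 0 ≤ B) (hA : ∀ s ∈ Icc 0 t₀, 0 ≤ A s) (hA_int : IntervalIntegrable A volume 0 t₀)
    (hg : ∀ s ∈ Icc 0 t₀, ‖g s‖ ≤ A s * R + B) (ht : t ∈ Icc 0 t₀) :
    ‖∫ s in (0 : ℝ)..t, g s‖ ≤ (∫ s in (0 : ℝ)..t₀, A s) * R + B * t₀ := by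
  have hint : IntervalIntegrable (fun s => A s * R + B) volume 0 t₀ :=
    (hA_int.mul_const R).add intervalIntegrable_const
  have hint_t : IntervalIntegrable (fun s => A s * R + B) volume 0 t :=
    hint.mono_set (uIcc_subset_uIcc_left (Icc_subset_uIcc ht))
  calc ‖∫ s in (0 : ℝ)..t, g s‖ ≤ ∫ s in (0 : ℝ)..t, (A s * R + B) :=
        intervalIntegral.norm_integral_le_of_norm_le ht.1
          (.of_forall fun s hs => hg s ⟨hs.1.le, hs.2.trans ht.2⟩) hint_t
    _ ≤ ∫ s in (0 : ℝ)..t₀, (A s * R + B) := by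
      refine intervalIntegral.integral_mono_interval le_rfl ht.1 ht.2 ?_ hint
      exact (ae_restrict_iff' measurableSet_Ioc).2 <| .of_forall fun s hs =>
        add_nonneg (mul_nonneg (hA s ⟨hs.1.le, hs.2⟩) hR) hB
    _ = (∫ s in (0 : ℝ)..t₀, A s) * R + B * t₀ := by
      rw [intervalIntegral.integral_add (hA_int.mul_const R) intervalIntegrable_const,
        intervalIntegral.integral_mul_const, intervalIntegral.integral_const, sub_zero,
        smul_eq_mul, mul_comm t₀]

theorem norm_integral_le_envelope_sub {g : ℝ → E} {t : ℝ} (ht : t₀ ≤ t)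
    (hg : ∀ s ∈ Icc t₀ t, ‖g s‖ ≤ C * (envelope R C t₀ s + 1)) :
    ‖∫ s in t₀..t, g s‖ ≤ envelope R C t₀ t - R := by
  have henv : ∀ s, t₀ ≤ s → envelope R C t₀ s + 1 = (R + 1) * Real.exp (C * (s - t₀)) :=
    fun s hs => by rw [envelope, max_eq_left (sub_nonneg.2 hs), sub_add_cancel]
  have hderiv : ∀ s, HasDerivAt (fun s => (R + 1) * Real.exp (C * (s - t₀)))
      (C * ((R + 1) * Real.exp (C * (s - t₀)))) s := fun s =>
    ((((hasDerivAt_id s).sub_const t₀).const_mul C).exp.const_mul (R + 1)).congr_deriv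
      (by rw [id]; ring)
  have hint : IntervalIntegrable (fun s => C * ((R + 1) * Real.exp (C * (s - t₀)))) volume t₀ t :=
    Continuous.intervalIntegrable (by fun_prop) t₀ t
  calc ‖∫ s in t₀..t, g s‖ ≤ ∫ s in t₀..t, C * ((R + 1) * Real.exp (C * (s - t₀))) :=
        intervalIntegral.norm_integral_le_of_norm_le ht (.of_forall fun s hs =>
          (hg s (Ioc_subset_Icc_self hs)).trans_eq (by rw [henv s hs.1.le])) hint
    _ = (R + 1) * Real.exp (C * (t - t₀)) - (R + 1) * Real.exp (C * (t₀ - t₀)) :=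
      intervalIntegral.integral_eq_sub_of_hasDerivAt (fun s _ => hderiv s) hint
    _ = envelope R C t₀ t - R := by
      rw [← henv t ht, ← henv t₀ le_rfl, envelope_of_le le_rfl]
      ring

theorem norm_integral_le_add_envelope_sub {g : ℝ → E} {A : ℝ → ℝ} {B b t : ℝ} (hR : 0 ≤ R)
    (hB : 0 ≤ B) (hA : ∀ s ∈ Icc 0 t₀, 0 ≤ A s) (hA_int : IntervalIntegrable A volume 0 t₀)
    (ht₀ : 0 ≤ t₀) (hgcont : ContinuousOn g (Ico 0 b)) (hg₁ : ∀ s ∈ Icc 0 t₀, ‖g s‖ ≤ A s * R + B)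
    (ht : t ∈ Ico 0 b) (hg₂ : ∀ s ∈ Icc t₀ t, ‖g s‖ ≤ C * (envelope R C t₀ s + 1)) :
    ‖∫ s in (0 : ℝ)..t, g s‖ ≤
      (∫ s in (0 : ℝ)..t₀, A s) * R + B * t₀ + (envelope R C t₀ t - R) := by
  rcases le_total t t₀ with h | h
  · rw [envelope_of_le h, sub_self, add_zero]
    exact norm_integral_le_of_norm_le_mul_add hR hB hA hA_int hg₁ ⟨ht.1, h⟩
  · have hzero : (0 : ℝ) ∈ Ico 0 b := ⟨le_rfl, ht.1.trans_lt ht.2⟩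
    have ht₀mem : t₀ ∈ Ico 0 b := ⟨ht₀, h.trans_lt ht.2⟩
    rw [← intervalIntegral.integral_add_adjacent_intervals
      (intervalIntegrable_of_continuousOn_Ico hgcont hzero ht₀mem)
      (intervalIntegrable_of_continuousOn_Ico hgcont ht₀mem ht)]
    exact (norm_add_le _ _).trans (add_le_add
      (norm_integral_le_of_norm_le_mul_add hR hB hA hA_int hg₁ (right_mem_Icc.2 ht₀))
      (norm_integral_le_envelope_sub h hg₂))

/-- The sequences of curves whose first `N` members stay below the envelope on `[0, τ]`. -/
def envelopeCurves (N : ℕ) (τ R C t₀ : ℝ) : Set (ℕ → ℝ → ℝ) :=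
  {x | ∀ n < N, ∀ t ∈ Icc 0 τ, |x n t| ≤ envelope R C t₀ t}

variable {N : ℕ} {τ : ℝ}

theorem isClosed_envelopeCurves : IsClosed (envelopeCurves N τ R C t₀) := by
  simp only [envelopeCurves, ofPred_forall]
  exact isClosed_iInter fun n => isClosed_iInter fun _ => isClosed_iInter fun t =>
    isClosed_iInter fun _ => isClosed_le (continuous_apply_apply n t).abs continuous_const

theorem convex_envelopeCurves : Convex ℝ (envelopeCurves N τ R C t₀) := by
  intro x hx y hy p q hp hq hpq n hn t ht
  have hball := convex_closedBall (0 : ℝ) (envelope R C t₀ t)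
  simpa using hball (x := x n t) (by simpa using hx n hn t ht) (y := y n t)
    (by simpa using hy n hn t ht) hp hq hpq

theorem zero_mem_envelopeCurves (hR : 0 ≤ R) (hC : 0 ≤ C) : 0 ∈ envelopeCurves N τ R C t₀ :=
  fun _ _ t _ => by simpa using envelope_nonneg hR hC t

theorem semS_le_envelope (hR : 0 ≤ R) (hC : 0 ≤ C) {x : ℕ → ℝ → ℝ}
    (hx : x ∈ envelopeCurves N τ R C t₀) {t : ℝ} (ht : t ∈ Icc 0 τ) :
    semS N (fun n => x n t) ≤ envelope R C t₀ t :=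
  semS_le (envelope_nonneg hR hC t) fun n hn => hx n hn t ht

theorem exists_forall_abs_le_of_mem_iInter_envelopeCurves {np : ℕ → ℕ} {ts R C : ℕ → ℝ} {b : ℝ}
    (hnp : Filter.Tendsto np Filter.atTop Filter.atTop)
    (htsb : Filter.Tendsto ts Filter.atTop (nhds b)) (hR : ∀ p, 0 ≤ R p) (hC : ∀ p, 0 ≤ C p)
    (n : ℕ) {T : ℝ} (hT : T < b) :
    ∃ M, ∀ x ∈ ⋂ p, envelopeCurves (np p) (ts p) (R p) (C p) t₀, ∀ t ∈ Icc 0 T, |x n t| ≤ M := by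
  obtain ⟨p, hpT, hpn⟩ :=
    ((htsb.eventually (lt_mem_nhds hT)).and (hnp.eventually_gt_atTop n)).exists
  exact ⟨envelope (R p) (C p) t₀ T, fun x hx t ht =>
    (mem_iInter.1 hx p n hpn t ⟨ht.1, ht.2.trans hpT.le⟩).trans
      (monotone_envelope (hR p) (hC p) ht.2)⟩

variable {f : ℕ → ℝ → (ℕ → ℝ) → ℝ} {α : ℕ → C(Icc (0 : ℝ) t₀, ℝ) →L[ℝ] ℝ}

theorem abs_nonlocalValue_le_semS {n : ℕ} (hn : n < N) {g : ℝ → ℝ} {Q : ℝ} (hQ : 0 ≤ Q)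
    (hg : ContinuousOn g (Icc 0 t₀)) (hgQ : ∀ t ∈ Icc 0 t₀, ‖∫ s in (0 : ℝ)..t, g s‖ ≤ Q) :
    |nonlocalValue (α n) g| ≤
      semS N (fun i => (1 - α i 1)⁻¹) * semS N (fun i => ‖α i‖) * Q := by
  have hinv := abs_le_semS hn fun i => (1 - α i 1)⁻¹
  have hnorm := (le_abs_self _).trans (abs_le_semS hn fun i => ‖α i‖)
  have hinv_nonneg := semS_nonneg N fun i => (1 - α i 1)⁻¹
  calc |nonlocalValue (α n) g| ≤ |(1 - α n 1)⁻¹| * (‖α n‖ * Q) := abs_nonlocalValue_le hQ hg hgQ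
    _ ≤ semS N (fun i => (1 - α i 1)⁻¹) * (semS N (fun i => ‖α i‖) * Q) := by gcongr
    _ = semS N (fun i => (1 - α i 1)⁻¹) * semS N (fun i => ‖α i‖) * Q := (mul_assoc _ _ _).symm

theorem integralOperator_mem_envelopeCurves {b : ℝ}
    (hf : ∀ n, ContinuousOn (fun q : ℝ × (ℕ → ℝ) => f n q.1 q.2) (Ico 0 b ×ˢ univ))
    {A : ℝ → ℝ} {B : ℝ} (hR : 0 ≤ R) (hB : 0 ≤ B) (hC : 0 ≤ C) (hA : ∀ t ∈ Icc 0 t₀, 0 ≤ A t)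
    (hA_int : IntervalIntegrable A volume 0 t₀) (ht₀ : 0 ≤ t₀) (ht₀τ : t₀ ≤ τ) (hτb : τ < b)
    (hgrowth₁ : ∀ t ∈ Icc 0 t₀, ∀ x, semS N (fun i => f i t x) ≤ A t * semS N x + B)
    (hgrowth₂ : ∀ t ∈ Icc t₀ τ, ∀ x, semS N (fun i => f i t x) ≤ C * (semS N x + 1))
    (hR_ge : (semS N (fun i => (1 - α i 1)⁻¹) * semS N (fun i => ‖α i‖) + 1) *
      ((∫ t in (0 : ℝ)..t₀, A t) * R + B * t₀) ≤ R)
    {x : ℕ → ℝ → ℝ} (hx : ∀ n, ContinuousOn (x n) (Ico 0 b))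
    (hxenv : x ∈ envelopeCurves N τ R C t₀) :
    integralOperator b f α x ∈ envelopeCurves N τ R C t₀ := by
  intro n hn t ht
  have htb : t ∈ Ico 0 b := Icc_subset_Ico_right hτb ht
  have hcont := continuousOn_superposition_Ico hf hx n
  have hg₁ : ∀ s ∈ Icc 0 t₀, |superposition f x n s| ≤ A s * R + B := fun s hs => by
    have hxs := semS_le_envelope hR hC hxenv ⟨hs.1, hs.2.trans ht₀τ⟩
    rw [envelope_of_le hs.2] at hxs
    have hAs := hA s hs
    exact (abs_le_semS hn _).trans ((hgrowth₁ s hs _).trans (by gcongr))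
  have hg₂ : ∀ s ∈ Icc t₀ t, |superposition f x n s| ≤ C * (envelope R C t₀ s + 1) :=
    fun s hs => by
      have hxs := semS_le_envelope hR hC hxenv ⟨ht₀.trans hs.1, hs.2.trans ht.2⟩
      exact (abs_le_semS hn _).trans ((hgrowth₂ s ⟨hs.1, hs.2.trans ht.2⟩ _).trans (by gcongr))
  have hQ : 0 ≤ (∫ t in (0 : ℝ)..t₀, A t) * R + B * t₀ :=
    add_nonneg (mul_nonneg (intervalIntegral.integral_nonneg ht₀ hA) hR) (mul_nonneg hB ht₀)
  have hvalue := abs_nonlocalValue_le_semS (α := α) hn hQ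
    (hcont.mono (Icc_subset_Ico_right (ht₀τ.trans_lt hτb)))
    fun t => norm_integral_le_of_norm_le_mul_add hR hB hA hA_int hg₁
  have hint : |∫ s in (0 : ℝ)..t, superposition f x n s| ≤
      (∫ s in (0 : ℝ)..t₀, A s) * R + B * t₀ + (envelope R C t₀ t - R) :=
    norm_integral_le_add_envelope_sub hR hB hA hA_int ht₀ hcont hg₁ htb hg₂
  rw [integralOperator, indicator_of_mem htb]
  linarith [abs_add_le (nonlocalValue (α n) (superposition f x n))
    (∫ s in (0 : ℝ)..t, superposition f x n s)]

end APrioriBounds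

/-- Main existence theorem on a bounded half-open interval `J_b = [0,b)` (Remark 3.2). -/
theorem statement_12
    (b : ℝ) (hb : 0 < b)
    (t₀ : ℝ) (ht₀ : 0 < t₀) (ht₀b : t₀ < b)
    (f : ℕ → ℝ → (ℕ → ℝ) → ℝ)
    (hf : ∀ n, ContinuousOn (fun q : ℝ × (ℕ → ℝ) => f n q.1 q.2)
      (Set.Ico (0:ℝ) b ×ˢ (Set.univ : Set (ℕ → ℝ))))
    (α : ℕ → C(Set.Icc (0:ℝ) t₀, ℝ) →L[ℝ] ℝ)
    (hα : ∀ n, α n 1 ≠ 1)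
    (np : ℕ → ℕ) (hnp : StrictMono np) (hnp0 : ∀ p, 0 < np p)
    (ts : ℕ → ℝ) (hts : StrictMono ts) (hts0 : t₀ < ts 0)
    (htsb : Filter.Tendsto ts Filter.atTop (nhds b))
    (A : ℕ → ℝ → ℝ) (B C : ℕ → ℝ)
    (hA_nonneg : ∀ p, ∀ t ∈ Set.Icc (0:ℝ) t₀, 0 ≤ A p t)
    (hA_int : ∀ p, IntervalIntegrable (A p) MeasureTheory.volume 0 t₀)
    (hB : ∀ p, 0 ≤ B p) (hC : ∀ p, 0 ≤ C p)
    (hgrowth1 : ∀ p, ∀ t ∈ Set.Icc (0:ℝ) t₀, ∀ x : ℕ → ℝ,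
      semS (np p) (fun i => f i t x) ≤ A p t * semS (np p) x + B p)
    (hgrowth2 : ∀ p, ∀ t ∈ Set.Icc t₀ (ts p), ∀ x : ℕ → ℝ,
      semS (np p) (fun i => f i t x) ≤ C p * (semS (np p) x + 1))
    (hsmall : ∀ p,
      (semS (np p) (fun i => (1 - α i 1)⁻¹) * semS (np p) (fun i => ‖α i‖) + 1) *
        (∫ t in (0:ℝ)..t₀, A p t) < 1) :
    ∃ (x : ℕ → ℝ → ℝ) (hc : ∀ n, ContinuousOn (x n) (Set.Ico (0:ℝ) b)),
      (∀ n : ℕ, ∀ t ∈ Set.Ico (0:ℝ) b,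
        HasDerivWithinAt (x n) (f n t (fun m => x m t)) (Set.Ico (0:ℝ) b) t) ∧
      (∀ n : ℕ, x n 0 = α n (ContinuousMap.mk ((Set.Icc (0:ℝ) t₀).restrict (x n))
        (((hc n).mono (fun s hs => ⟨hs.1, lt_of_le_of_lt hs.2 ht₀b⟩)).restrict))) := by
  have ht₀ts : ∀ p, t₀ < ts p := fun p => hts0.trans_le (hts.monotone p.zero_le)
  have hts_lt : ∀ p, ts p < b := fun p =>
    (hts p.lt_succ_self).trans_le (hts.monotone.ge_of_tendsto htsb _)
  choose R hR hR_eq using fun p => exists_nonneg_mul_add_eq_self (hsmall p)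
    (mul_nonneg (add_nonneg (mul_nonneg (semS_nonneg (np p) fun i => (1 - α i 1)⁻¹)
      (semS_nonneg (np p) fun i => ‖α i‖)) zero_le_one) (mul_nonneg (hB p) ht₀.le))
  let D := ⋂ p, envelopeCurves (np p) (ts p) (R p) (C p) t₀
  have hmaps : ∀ x ∈ D, (∀ n, ContinuousOn (x n) (Ico 0 b)) → integralOperator b f α x ∈ D :=
    fun x hxD hx => mem_iInter.2 fun p =>
      integralOperator_mem_envelopeCurves hf (hR p) (hB p) (hC p) (hA_nonneg p) (hA_int p) ht₀.le
        (ht₀ts p).le (hts_lt p) (hgrowth1 p) (hgrowth2 p) (by linarith [hR_eq p]) hx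
        (mem_iInter.1 hxD p)
  obtain ⟨x, hx, hfix⟩ := exists_isFixedPt_integralOperator hf ht₀b
    (isClosed_iInter fun _ => isClosed_envelopeCurves)
    (convex_iInter fun _ => convex_envelopeCurves)
    (mem_iInter.2 fun p => zero_mem_envelopeCurves (hR p) (hC p))
    (fun n T hT => exists_forall_abs_le_of_mem_iInter_envelopeCurves hnp.tendsto_atTop htsb hR hC n
      hT.2) hmaps
  exact ⟨x, hx, fun n t ht => hasDerivWithinAt_of_isFixedPt_integralOperator hf hx hfix n ht,
    fun n => eq_apply_of_isFixedPt_integralOperator hf hb ht₀b hx hfix (hα n) fun _ => rfl⟩
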